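/- For all integers n, k, i, j with 1 ≤ k ≤ n, 0 ≤ i ≤ k−1 and 0 ≤ j ≤ n−k, the number of ordered partitions π = (L_1,…,L_k) of [n] = {1,…,n} into k nonempty lists such that nsb(π) = i and nse(π) = j equals c(n, n−j) · S(n−j, k) · c(k, k−i), where c denotes the unsigned Stirling number of the first kind and S denotes the Stirling number of the second kind. -/

import Mathlib

open Finset

/-- The number of cycles (including fixed points) of a permutation of `Fin n`. -/
noncomputable def cycleCount {n : ℕ} (σ : Equiv.Perm (Fin n)) : ℕ :=
  σ.cycleType.card + (Finset.univ.filter fun x => σ x = x).card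

/-- The unsigned Stirling number of the first kind `c(n,k)`: the number of
permutations of an `n`-element set with exactly `k` cycles. -/
noncomputable def stirlingFirst (n k : ℕ) : ℕ :=
  Set.ncard {σ : Equiv.Perm (Fin n) | cycleCount σ = k}

/-- The signed Stirling number of the first kind `s(n,k) = (-1)^(n-k) c(n,k)`. -/
noncomputable def stirlingFirstSigned (n k : ℕ) : ℤ :=
  (-1) ^ (n - k) * (stirlingFirst n k : ℤ)

/-- `P` is an (unordered) partition of `Fin n` into nonempty blocks. -/
def IsPartitionOf (n : ℕ) (P : Finset (Finset (Fin n))) : Prop :=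
  (∀ b ∈ P, b.Nonempty) ∧ (∀ b ∈ P, ∀ c ∈ P, b ≠ c → Disjoint b c) ∧
    ∀ x : Fin n, ∃ b ∈ P, x ∈ b

/-- The Stirling number of the second kind `S(n,k)`: the number of partitions of an
`n`-element set into exactly `k` nonempty blocks. -/
noncomputable def stirlingSecond (n k : ℕ) : ℕ :=
  Set.ncard {P : Finset (Finset (Fin n)) | IsPartitionOf n P ∧ P.card = k}

/-- The Bell number `B n`: the number of partitions of an `n`-element set into
nonempty blocks. -/
noncomputable def bell (n : ℕ) : ℕ :=
  Set.ncard {P : Finset (Finset (Fin n)) | IsPartitionOf n P}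

/-- The statistic `nse` of a list: the number of positions `j` such that some later
entry is smaller than the entry at position `j`. -/
def nseList {α : Type*} [LinearOrder α] : List α → ℕ
  | [] => 0
  | a :: w => (if ∃ b ∈ w, b < a then 1 else 0) + nseList w

/-- `B` is an ordered set partition ("list of sets") of `Fin n` into `k` pairwise
disjoint nonempty blocks. -/
def IsOrderedSetPartition (n k : ℕ) (B : Fin k → Finset (Fin n)) : Prop :=
  (∀ j, (B j).Nonempty) ∧ (∀ j l, j ≠ l → Disjoint (B j) (B l)) ∧
    ∀ x : Fin n, ∃ j, x ∈ B j

/-- The statistic `nsb` of an ordered set partition: the number of indices `j`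
such that `min (B j) > min (B l)` for some `l > j`. -/
def nsbOSP {n k : ℕ} (B : Fin k → Finset (Fin n)) : ℕ :=
  (Finset.univ.filter fun j : Fin k => ∃ l, j < l ∧ (B l).min < (B j).min).card

/-- `P` is a "set of lists" partition of `Fin n`: an unordered collection of nonempty
sequences of distinct elements, with pairwise disjoint underlying sets covering `Fin n`. -/
def IsSetOfLists (n : ℕ) (P : Finset (List (Fin n))) : Prop :=
  (∀ w ∈ P, w ≠ []) ∧ (∀ w ∈ P, w.Nodup) ∧
    (∀ w ∈ P, ∀ u ∈ P, w ≠ u → ∀ x ∈ w, x ∉ u) ∧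
    ∀ x : Fin n, ∃ w ∈ P, x ∈ w

/-- The statistic `nse` of a set of lists: the sum of `nseList` over its blocks. -/
def nseSL {n : ℕ} (P : Finset (List (Fin n))) : ℕ := ∑ w ∈ P, nseList w

/-- `L` is a "list of lists" partition of `Fin n` into `k` blocks: a sequence of `k`
nonempty sequences of distinct elements, with pairwise disjoint underlying sets
covering `Fin n`. -/
def IsListOfLists (n k : ℕ) (L : Fin k → List (Fin n)) : Prop :=
  (∀ j, L j ≠ []) ∧ (∀ j, (L j).Nodup) ∧
    (∀ j l, j ≠ l → ∀ x ∈ L j, x ∉ L l) ∧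
    ∀ x : Fin n, ∃ j, x ∈ L j

/-- The statistic `nse` of a list of lists: the sum of `nseList` over its blocks. -/
def nseLL {n k : ℕ} (L : Fin k → List (Fin n)) : ℕ := ∑ j, nseList (L j)

/-- The statistic `nsb` of a list of lists: the number of indices `j` such that
`min (L j) > min (L l)` for some `l > j`. -/
def nsbLL {n k : ℕ} (L : Fin k → List (Fin n)) : ℕ :=
  (Finset.univ.filter fun j : Fin k => ∃ l, j < l ∧ (L l).minimum < (L j).minimum).card


section PermPart
open Equiv Equiv.Perm

lemma cycleCount_add_support {n : ℕ} (σ : Equiv.Perm (Fin n)) :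
    cycleCount σ + σ.support.card = σ.cycleType.card + n := by
  have h : (Finset.univ.filter fun x => σ x = x) = σ.supportᶜ := by
    ext x; simp
  have h2 := Finset.card_add_card_compl σ.support
  rw [Fintype.card_fin] at h2
  unfold cycleCount
  rw [h]; omega

lemma cycleCount_swap_mul {n : ℕ} (τ : Equiv.Perm (Fin n)) (x : Fin n) (hx : τ x ≠ x) :
    cycleCount (Equiv.swap x (τ x) * τ) = cycleCount τ + 1 := by
  have hf : τ.cycleOf x ∈ τ.cycleFactorsFinset := by
    rw [cycleOf_mem_cycleFactorsFinset_iff]; simpa using hx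
  have hcyc : (τ.cycleOf x).IsCycle := isCycle_cycleOf τ hx
  have hdis := disjoint_mul_inv_of_mem_cycleFactorsFinset hf
  obtain ⟨f, hfdef⟩ : ∃ f, f = τ.cycleOf x := ⟨_, rfl⟩
  have hfx : f x = τ x := by rw [hfdef]; simp
  rw [← hfdef] at hdis hcyc
  obtain ⟨g, hg⟩ : ∃ g, g = τ * f⁻¹ := ⟨_, rfl⟩
  rw [← hg] at hdis
  have hτ : τ = f * g := by
    rw [← hdis.commute.eq, hg]; simp
  have hffx : f (f x) = τ (τ x) := by
    rw [hfx, hfdef]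
    exact (SameCycle.cycleOf_apply ⟨1, by simp⟩)
  have hσ : Equiv.swap x (τ x) * τ = (Equiv.swap x (f x) * f) * g := by
    rw [hfx, mul_assoc, ← hτ]
  have e1 := cycleCount_add_support τ
  have e2 := cycleCount_add_support (Equiv.swap x (τ x) * τ)
  have ct : τ.cycleType.card = 1 + g.cycleType.card := by
    rw [hτ, hdis.symm.cycleType_mul, Multiset.card_add, card_cycleType_eq_one.2 hcyc]
  have st : τ.support.card = f.support.card + g.support.card := by
    rw [hτ, hdis.symm.card_support_mul]
  by_cases h : τ (τ x) = x
  · have hfs : f = Equiv.swap x (f x) := hcyc.eq_swap_of_apply_apply_eq_self (by rw [hfx]; exact hx) (by rw [hffx]; exact h)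
    have hs1 : Equiv.swap x (f x) * f = 1 := by
      conv_lhs => rw [hfs]
      simp
    have hσg : Equiv.swap x (τ x) * τ = g := by rw [hσ, hs1, one_mul]
    rw [hσg] at e2 ⊢
    have : f.support.card = 2 := by
      rw [hfs]; apply card_support_swap; rw [hfx]; exact hx.symm
    omega
  · have hc2 := hcyc.swap_mul (x := x) (by rw [hfx]; exact hx) (by rw [hffx]; exact h)
    have hs := support_swap_mul_eq τ x h
    have hs' := support_swap_mul_eq f x (by rw [hffx]; exact h)
    have hd2 : Disjoint (Equiv.swap x (f x) * f) g := by
      rw [disjoint_iff_disjoint_support] at hdis ⊢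
      rw [hs']
      exact (hdis.symm).mono_left Finset.sdiff_subset
    have ct2 : (Equiv.swap x (τ x) * τ).cycleType.card = 1 + g.cycleType.card := by
      rw [hσ, hd2.cycleType_mul, Multiset.card_add, card_cycleType_eq_one.2 hc2]
    have : (Equiv.swap x (τ x) * τ).support.card = τ.support.card - 1 := by
      rw [hs, Finset.card_sdiff_of_subset (by simpa using hx)]; simp
    have : 0 < τ.support.card := Finset.card_pos.2 ⟨x, by simpa using hx⟩
    omega

lemma cycleCount_decompose_zero {n : ℕ} (e : Equiv.Perm (Fin n)) :
    cycleCount (decomposeFin.symm (0, e)) = cycleCount e + 1 := by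
  have h : decomposeFin.symm (0, e) = e.extendDomain (finSuccAboveEquiv (0 : Fin (n+1))) := by
    ext x
    refine Fin.cases ?_ (fun y => ?_) x
    · rw [extendDomain_apply_not_subtype] <;> simp
    · have := extendDomain_apply_image e (finSuccAboveEquiv (0 : Fin (n+1))) y
      have h1 : ((finSuccAboveEquiv (0 : Fin (n+1)) y : {x : Fin (n+1) // x ≠ 0}) : Fin (n+1)) = y.succ := by
        simp [finSuccAboveEquiv_apply]
      rw [h1] at this
      rw [this]
      simp [finSuccAboveEquiv_apply]
  have e1 := cycleCount_add_support e
  have e2 := cycleCount_add_support (decomposeFin.symm (0, e))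
  rw [h, cycleType_extendDomain, card_support_extend_domain] at e2
  rw [h]; omega

lemma cycleCount_decompose {n : ℕ} (p : Fin (n+1)) (e : Equiv.Perm (Fin n)) :
    cycleCount (decomposeFin.symm (p, e)) = cycleCount e + if p = 0 then 1 else 0 := by
  by_cases hp : p = 0
  · subst hp; simp [cycleCount_decompose_zero]
  · have h0 : decomposeFin.symm (p, e) 0 = p := by simp
    have := cycleCount_swap_mul (decomposeFin.symm (p, e)) 0 (by rw [h0]; exact hp)
    have h2 : Equiv.swap 0 (decomposeFin.symm (p, e) 0) * decomposeFin.symm (p, e)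
        = decomposeFin.symm (0, e) := by
      ext x
      refine Fin.cases ?_ (fun y => ?_) x <;> simp
    rw [h2, cycleCount_decompose_zero] at this
    simp [hp]; omega

lemma stirlingFirst_eq (n k : ℕ) : stirlingFirst n k = Nat.stirlingFirst n k := by
  induction n generalizing k with
  | zero =>
    unfold stirlingFirst
    have h : ∀ σ : Equiv.Perm (Fin 0), cycleCount σ = 0 := by
      intro σ
      rw [Subsingleton.elim σ 1]; simp [cycleCount]
    rcases k with _ | k
    · simp [h]
    · simp [h]
  | succ n ih =>
    have key : stirlingFirst (n+1) k = Set.ncard {pe : Fin (n+1) × Equiv.Perm (Fin n) |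
        cycleCount pe.2 + (if pe.1 = 0 then 1 else 0) = k} := by
      unfold stirlingFirst
      rw [← Set.ncard_image_of_injective _ decomposeFin.symm.injective]
      congr 1
      ext σ
      constructor
      · intro h
        refine ⟨decomposeFin σ, ?_, by simp⟩
        have := cycleCount_decompose (decomposeFin σ).1 (decomposeFin σ).2
        simp only [Prod.mk.eta, Equiv.symm_apply_apply] at this
        simpa [← this] using h
      · rintro ⟨⟨p, e⟩, h, rfl⟩
        simpa [cycleCount_decompose] using h
    have split : {pe : Fin (n+1) × Equiv.Perm (Fin n) |
        cycleCount pe.2 + (if pe.1 = 0 then 1 else 0) = k} =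
        ({0}ᶜ ×ˢ {e | cycleCount e = k}) ∪ ({0} ×ˢ {e | cycleCount e + 1 = k}) := by
      ext ⟨p, e⟩
      by_cases hp : p = 0 <;> simp [hp]
    have c0 : ({0}ᶜ : Set (Fin (n+1))).ncard = n := by
      rw [Set.ncard_compl]; simp
    rw [key, split, Set.ncard_union_eq, Set.ncard_prod, Set.ncard_prod, c0]
    · have : Set.ncard {e : Equiv.Perm (Fin n) | cycleCount e = k} = Nat.stirlingFirst n k := ih k
      rw [this]
      rcases k with _ | k
      · rcases n with _ | n <;> simp
      · have : Set.ncard {e : Equiv.Perm (Fin n) | cycleCount e = k} = Nat.stirlingFirst n k := ih k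
        simp [this, Nat.stirlingFirst_succ_succ]
    · rw [Set.disjoint_left]
      rintro ⟨p, e⟩ h1 h2
      exact h1.1 h2.1
end PermPart

section ListPart

lemma minimum_lt_minimum_iff {α : Type*} [LinearOrder α] (u v : List α) :
    u.minimum < v.minimum ↔ ∃ x ∈ u, ∀ y ∈ v, x < y := by
  constructor
  · intro h
    have hne : u ≠ [] := by
      rintro rfl; simp at h
    obtain ⟨m, hm⟩ := WithTop.ne_top_iff_exists.1 (List.minimum_ne_top_of_ne_nil hne)
    refine ⟨m, List.minimum_mem hm.symm, fun y hy => ?_⟩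
    have := lt_of_lt_of_le h (List.minimum_le_of_mem' hy)
    rw [← hm] at this
    exact WithTop.coe_lt_coe.1 this
  · rintro ⟨x, hx, h⟩
    refine lt_of_le_of_lt (List.minimum_le_of_mem' hx) ?_
    rcases eq_or_ne v [] with rfl | hv
    · simp
    · obtain ⟨m, hm⟩ := WithTop.ne_top_iff_exists.1 (List.minimum_ne_top_of_ne_nil hv)
      rw [← hm]
      exact WithTop.coe_lt_coe.2 (h m (List.minimum_mem hm.symm))

lemma nsbLL_eq {n k : ℕ} (L : Fin k → List (Fin n)) :
    nsbLL L = (Finset.univ.filter fun j : Fin k =>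
      ∃ l, j < l ∧ ∃ x ∈ L l, ∀ y ∈ L j, x < y).card := by
  unfold nsbLL
  simp only [minimum_lt_minimum_iff]

/-- Insert the new largest element immediately before the element `x`. -/
def insBefore {n : ℕ} (x : Fin n) : List (Fin n) → List (Fin (n+1))
  | [] => []
  | z :: w => if z = x then Fin.last n :: z.castSucc :: insBefore x w
      else z.castSucc :: insBefore x w

/-- Delete the largest element. -/
def delLast {n : ℕ} (w : List (Fin (n+1))) : List (Fin n) :=
  w.filterMap (fun y => if h : y ≠ Fin.last n then some (y.castPred h) else none)

lemma delLast_castSucc_cons {n : ℕ} (z : Fin n) (w : List (Fin (n+1))) :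
    delLast (z.castSucc :: w) = z :: delLast w := by
  simp [delLast, Fin.castSucc_ne_last]

lemma delLast_last_cons {n : ℕ} (w : List (Fin (n+1))) :
    delLast (Fin.last n :: w) = delLast w := by
  simp [delLast]

lemma delLast_map {n : ℕ} (w : List (Fin n)) : delLast (w.map Fin.castSucc) = w := by
  induction w with
  | nil => rfl
  | cons z w ih => rw [List.map_cons, delLast_castSucc_cons, ih]

lemma delLast_insBefore {n : ℕ} (x : Fin n) (w : List (Fin n)) :
    delLast (insBefore x w) = w := by
  induction w with
  | nil => rfl
  | cons z w ih =>
    unfold insBefore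
    split_ifs <;> simp [delLast_castSucc_cons, delLast_last_cons, ih]

lemma delLast_append {n : ℕ} (u v : List (Fin (n+1))) :
    delLast (u ++ v) = delLast u ++ delLast v := by
  simp [delLast]

lemma exists_map_of_last_notMem {n : ℕ} (w : List (Fin (n+1))) (h : Fin.last n ∉ w) :
    ∃ u : List (Fin n), w = u.map Fin.castSucc := by
  induction w with
  | nil => exact ⟨[], rfl⟩
  | cons z w ih =>
    simp only [List.mem_cons, not_or] at h
    obtain ⟨u, rfl⟩ := ih h.2
    exact ⟨z.castPred (Ne.symm h.1) :: u, by simp⟩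

lemma mem_insBefore {n : ℕ} (x : Fin n) (w : List (Fin n)) (y : Fin (n+1)) :
    y ∈ insBefore x w ↔ (∃ z ∈ w, y = z.castSucc) ∨ (y = Fin.last n ∧ x ∈ w) := by
  induction w with
  | nil => simp [insBefore]
  | cons z w ih =>
    unfold insBefore
    split_ifs with h
    · subst h; simp only [List.mem_cons, ih]; grind
    · simp only [List.mem_cons, ih]; grind

lemma insBefore_of_notMem {n : ℕ} (x : Fin n) (w : List (Fin n)) (h : x ∉ w) :
    insBefore x w = w.map Fin.castSucc := by
  induction w with
  | nil => rfl
  | cons z w ih =>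
    simp only [List.mem_cons, not_or] at h
    unfold insBefore
    rw [if_neg (Ne.symm h.1), ih h.2, List.map_cons]

lemma insBefore_append {n : ℕ} (x : Fin n) (u v : List (Fin n)) :
    insBefore x (u ++ v) = insBefore x u ++ insBefore x v := by
  induction u with
  | nil => rfl
  | cons z u ih =>
    simp only [List.cons_append, insBefore, ih]
    split_ifs <;> simp

lemma insBefore_inj {n : ℕ} (x y : Fin n) (w : List (Fin n)) (hx : x ∈ w)
    (h : insBefore x w = insBefore y w) : x = y := by
  induction w with
  | nil => simp at hx
  | cons z w ih =>
    have l1 : Fin.last n ≠ z.castSucc := (Fin.castSucc_ne_last z).symm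
    unfold insBefore at h
    split_ifs at h with h1 h2 h2
    · rw [← h1, h2]
    · simp [l1] at h
    · simp [l1.symm] at h
    · refine ih ?_ (List.cons.inj h).2
      grind

lemma nodup_insBefore {n : ℕ} (x : Fin n) (w : List (Fin n)) :
    (insBefore x w).Nodup ↔ w.Nodup := by
  induction w with
  | nil => simp [insBefore]
  | cons z w ih =>
    have l1 : ∀ z : Fin n, z.castSucc ≠ Fin.last n := Fin.castSucc_ne_last
    unfold insBefore
    split_ifs with h
    · subst h
      simp only [List.nodup_cons, ih, List.mem_cons, mem_insBefore]
      simp [l1, (l1 z).symm]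
      intro h1 _
      exact ⟨fun z _ => (l1 z).symm, h1⟩
    · simp only [List.nodup_cons, ih, mem_insBefore]
      simp [l1]

lemma insBefore_eq_nil {n : ℕ} (x : Fin n) (w : List (Fin n)) :
    insBefore x w = [] ↔ w = [] := by
  cases w with
  | nil => simp [insBefore]
  | cons z w => unfold insBefore; split_ifs <;> simp

lemma nse_map {n : ℕ} (w : List (Fin n)) : nseList (w.map Fin.castSucc) = nseList w := by
  induction w with
  | nil => rfl
  | cons z w ih => simp [nseList, ih]

lemma nse_append_last {n : ℕ} (w : List (Fin n)) :
    nseList (w.map Fin.castSucc ++ [Fin.last n]) = nseList w := by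
  induction w with
  | nil => simp [nseList]
  | cons z w ih =>
    simp only [List.map_cons, List.cons_append, nseList, ih]
    congr 2
    simp only [List.mem_append, List.mem_singleton, List.mem_map, eq_iff_iff]
    constructor
    · rintro ⟨b, ⟨a, ha, rfl⟩ | rfl, hb⟩
      · exact ⟨a, ha, by simpa using hb⟩
      · exact absurd hb (by simp [Fin.le_last])
    · rintro ⟨b, hb, h⟩
      exact ⟨b.castSucc, Or.inl ⟨b, hb, rfl⟩, by simpa using h⟩

lemma nse_insBefore {n : ℕ} (x : Fin n) (w : List (Fin n)) (hw : w.Nodup) :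
    nseList (insBefore x w) = nseList w + if x ∈ w then 1 else 0 := by
  induction w with
  | nil => simp [insBefore, nseList]
  | cons z w ih =>
    rw [List.nodup_cons] at hw
    unfold insBefore
    split_ifs with h h1 h1
    · subst h
      rw [insBefore_of_notMem _ _ hw.1, ← List.map_cons]
      rw [nseList, nse_map, if_pos, add_comm]
      exact ⟨z.castSucc, by simp, Fin.castSucc_lt_last z⟩
    · grind
    · have hx : x ∈ w := by grind
      rw [nseList, nseList, ih hw.2, if_pos hx, ← add_assoc]
      congr 3
      simp only [mem_insBefore, eq_iff_iff]
      constructor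
      · rintro ⟨b, ⟨a, ha, rfl⟩ | ⟨rfl, _⟩, hb⟩
        · exact ⟨a, ha, by simpa using hb⟩
        · exact absurd hb (by simp [Fin.le_last])
      · rintro ⟨b, hb, h⟩
        exact ⟨b.castSucc, Or.inl ⟨b, hb, rfl⟩, by simpa using h⟩
    · rw [insBefore_of_notMem _ _ (by grind), ← List.map_cons, nse_map]; simp

/-- membership pattern shared by the first two insertions -/
lemma nsb_of_mem {n k : ℕ} (L : Fin k → List (Fin n)) (M : Fin k → List (Fin (n+1)))
    (b0 : Fin k) (hne : ∀ b, L b ≠ [])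
    (hM : ∀ b y, y ∈ M b ↔ (∃ z ∈ L b, y = z.castSucc) ∨ (y = Fin.last n ∧ b = b0)) :
    nsbLL M = nsbLL L := by
  rw [nsbLL_eq, nsbLL_eq]
  congr 1
  apply Finset.filter_congr
  intro j _
  constructor
  · rintro ⟨l, hl, x, hx, h⟩
    refine ⟨l, hl, ?_⟩
    rw [hM] at hx
    obtain ⟨y, hy⟩ := List.exists_mem_of_ne_nil _ (hne j)
    rcases hx with ⟨z, hz, rfl⟩ | ⟨rfl, _⟩
    · refine ⟨z, hz, fun y hy => ?_⟩
      simpa using h y.castSucc ((hM _ _).2 (Or.inl ⟨y, hy, rfl⟩))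
    · have := h y.castSucc ((hM _ _).2 (Or.inl ⟨y, hy, rfl⟩))
      exact absurd this (by simp [Fin.le_last])
  · rintro ⟨l, hl, x, hx, h⟩
    refine ⟨l, hl, x.castSucc, (hM _ _).2 (Or.inl ⟨x, hx, rfl⟩), fun y hy => ?_⟩
    rcases (hM _ _).1 hy with ⟨z, hz, rfl⟩ | ⟨rfl, _⟩
    · simpa using h z hz
    · exact Fin.castSucc_lt_last x

lemma lists_of_mem {n k : ℕ} (L : Fin k → List (Fin n)) (M : Fin k → List (Fin (n+1)))
    (b0 : Fin k) (hne : ∀ b, L b ≠ [])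
    (hM : ∀ b y, y ∈ M b ↔ (∃ z ∈ L b, y = z.castSucc) ∨ (y = Fin.last n ∧ b = b0))
    (hnd : ∀ b, (M b).Nodup ↔ (L b).Nodup) :
    IsListOfLists (n+1) k M ↔ IsListOfLists n k L := by
  have l1 : ∀ z : Fin n, z.castSucc ≠ Fin.last n := Fin.castSucc_ne_last
  have hc : ∀ b z, z.castSucc ∈ M b ↔ z ∈ L b := by
    intro b z
    rw [hM]; simp [l1]
  unfold IsListOfLists
  constructor
  · rintro ⟨h1, h2, h3, h4⟩
    refine ⟨hne, fun b => (hnd b).1 (h2 b), ?_, ?_⟩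
    · intro j l hjl x hx hx'
      exact h3 j l hjl x.castSucc ((hc _ _).2 hx) ((hc _ _).2 hx')
    · intro x
      obtain ⟨j, hj⟩ := h4 x.castSucc
      exact ⟨j, (hc _ _).1 hj⟩
  · rintro ⟨h1, h2, h3, h4⟩
    refine ⟨?_, fun b => (hnd b).2 (h2 b), ?_, ?_⟩
    · intro b hb
      obtain ⟨y, hy⟩ := List.exists_mem_of_ne_nil _ (hne b)
      have := (hc b y).2 hy
      rw [hb] at this; simp at this
    · intro j l hjl x hx hx'
      rcases (hM _ _).1 hx with ⟨z, hz, rfl⟩ | ⟨rfl, e1⟩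
      · exact h3 j l hjl z hz ((hc _ _).1 hx')
      · rcases (hM _ _).1 hx' with ⟨z, hz, e⟩ | ⟨_, e2⟩
        · exact l1 z e.symm
        · exact hjl (e1.trans e2.symm)
    · intro x
      refine Fin.lastCases ?_ (fun z => ?_) x
      · exact ⟨b0, (hM _ _).2 (Or.inr ⟨rfl, rfl⟩)⟩
      · obtain ⟨j, hj⟩ := h4 z
        exact ⟨j, (hc _ _).2 hj⟩

/-- The counted set. -/
def XX (n k i j : ℕ) : Set (Fin k → List (Fin n)) :=
  {L | IsListOfLists n k L ∧ nsbLL L = i ∧ nseLL L = j}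

def phi1 {n k : ℕ} (p : Fin n × (Fin k → List (Fin n))) : Fin k → List (Fin (n+1)) :=
  fun b => insBefore p.1 (p.2 b)

def phi2 {n k : ℕ} (p : Fin k × (Fin k → List (Fin n))) : Fin k → List (Fin (n+1)) :=
  fun b => (p.2 b).map Fin.castSucc ++ if b = p.1 then [Fin.last n] else []

def phi3 {n k : ℕ} (p : Fin (k+1) × (Fin k → List (Fin n))) : Fin (k+1) → List (Fin (n+1)) :=
  Fin.insertNth (α := fun _ => List (Fin (n+1))) p.1 [Fin.last n]
    (fun b => (p.2 b).map Fin.castSucc)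

/-- no block ends in the largest element -/
def P1 {n k : ℕ} (M : Fin k → List (Fin (n+1))) : Prop :=
  ∀ b, ∀ u, M b ≠ u ++ [Fin.last n]

/-- some block is the singleton of the largest element -/
def P3 {n k : ℕ} (M : Fin k → List (Fin (n+1))) : Prop :=
  ∃ b, M b = [Fin.last n]

lemma phi1_mem {n k : ℕ} (x : Fin n) (L : Fin k → List (Fin n))
    (b0 : Fin k) (hb0 : x ∈ L b0) (h3 : ∀ j l, j ≠ l → ∀ x ∈ L j, x ∉ L l) (b : Fin k)
    (y : Fin (n+1)) : y ∈ phi1 (x, L) b ↔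
      (∃ z ∈ L b, y = z.castSucc) ∨ (y = Fin.last n ∧ b = b0) := by
  have : x ∈ L b ↔ b = b0 := by
    constructor
    · intro h
      by_contra hne
      exact h3 b b0 hne x h hb0
    · rintro rfl; exact hb0
  simp only [phi1, mem_insBefore, this]

lemma phi2_mem {n k : ℕ} (b0 : Fin k) (L : Fin k → List (Fin n)) (b : Fin k)
    (y : Fin (n+1)) : y ∈ phi2 (b0, L) b ↔
      (∃ z ∈ L b, y = z.castSucc) ∨ (y = Fin.last n ∧ b = b0) := by
  unfold phi2
  by_cases h : b = b0
  · simp [h, eq_comm]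
  · simp [h, eq_comm]

lemma phi2_nodup {n k : ℕ} (b0 : Fin k) (L : Fin k → List (Fin n)) (b : Fin k) :
    (phi2 (b0, L) b).Nodup ↔ (L b).Nodup := by
  have hi : ((L b).map Fin.castSucc).Nodup ↔ (L b).Nodup :=
    List.nodup_map_iff (Fin.castSucc_injective n)
  unfold phi2
  by_cases h : b = b0
  · subst h
    simp [List.nodup_append, hi, Fin.castSucc_ne_last]
  · simp [h, hi]

lemma phi1_nse {n k : ℕ} (x : Fin n) (L : Fin k → List (Fin n)) (hL : IsListOfLists n k L) :
    nseLL (phi1 (x, L)) = nseLL L + 1 := by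
  obtain ⟨h1, h2, h3, h4⟩ := hL
  obtain ⟨b0, hb0⟩ := h4 x
  unfold nseLL phi1
  simp only [nse_insBefore _ _ (h2 _), Finset.sum_add_distrib]
  congr 1
  rw [Finset.sum_eq_single b0]
  · simp [hb0]
  · intro b _ hb
    rw [if_neg]
    intro h
    exact h3 b b0 hb x h hb0
  · simp

lemma phi2_nse {n k : ℕ} (b0 : Fin k) (L : Fin k → List (Fin n)) :
    nseLL (phi2 (b0, L)) = nseLL L := by
  unfold nseLL phi2
  apply Finset.sum_congr rfl
  intro b _
  by_cases h : b = b0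
  · simp [h, nse_append_last]
  · simp [h, nse_map]

lemma exists_block {n k : ℕ} (M : Fin k → List (Fin (n+1))) (hM : IsListOfLists (n+1) k M) :
    ∃ b0, ∃ u v : List (Fin n), M b0 = u.map Fin.castSucc ++ Fin.last n :: v.map Fin.castSucc ∧
      ∀ b, b ≠ b0 → ∃ w : List (Fin n), M b = w.map Fin.castSucc := by
  obtain ⟨h1, h2, h3, h4⟩ := hM
  obtain ⟨b0, hb0⟩ := h4 (Fin.last n)
  obtain ⟨u, v, huv⟩ := List.append_of_mem hb0
  have hn := h2 b0
  rw [huv, List.nodup_append, List.nodup_cons] at hn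
  obtain ⟨u', rfl⟩ := exists_map_of_last_notMem u (fun h => hn.2.2 _ h _ (by simp) rfl)
  obtain ⟨v', rfl⟩ := exists_map_of_last_notMem v hn.2.1.1
  refine ⟨b0, u', v', huv, fun b hb => exists_map_of_last_notMem _ (fun h => ?_)⟩
  exact h3 b b0 hb _ h hb0

end ListPart

section SetPart

lemma phi1_P1 {n k : ℕ} (x : Fin n) (L : Fin k → List (Fin n)) : P1 (phi1 (x, L)) := by
  intro b u h
  unfold phi1 at h
  simp only at h
  rcases List.eq_nil_or_concat (L b) with h0 | ⟨w, z, h0⟩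
  · rw [h0] at h; simp [insBefore] at h
  · rw [h0, List.concat_eq_append, insBefore_append] at h
    have : insBefore x [z] = (if z = x then [Fin.last n] else []) ++ [z.castSucc] := by
      simp only [insBefore]; split_ifs <;> simp
    rw [this, ← List.append_assoc] at h
    have := List.append_inj_right' h rfl
    simp [Fin.castSucc_ne_last] at this

lemma setA {n k i j : ℕ} : {M | M ∈ XX (n+1) k i j ∧ P1 M} =
    phi1 '' ((Set.univ : Set (Fin n)) ×ˢ
      {L : Fin k → List (Fin n) | IsListOfLists n k L ∧ nsbLL L = i ∧ nseLL L + 1 = j}) := by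
  ext M
  constructor
  · rintro ⟨⟨hM, hi, hj⟩, hP⟩
    obtain ⟨b0, u, v, huv, hb⟩ := exists_block M hM
    obtain ⟨h1, h2, h3, h4⟩ := id hM
    rcases v with _ | ⟨x, v⟩
    · exact absurd huv (hP b0 _)
    · have hnd := h2 b0
      rw [huv] at hnd
      have hxu : x ∉ u := by
        intro hx
        rw [List.nodup_append] at hnd
        exact hnd.2.2 _ (List.mem_map_of_mem hx) x.castSucc (by simp) rfl
      have hxv : x ∉ v := by
        intro hx
        rw [List.nodup_append, List.nodup_cons, List.map_cons, List.nodup_cons] at hnd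
        exact hnd.2.1.2.1 (List.mem_map_of_mem hx)
      obtain ⟨L, hL⟩ : ∃ L : Fin k → List (Fin n), L = fun b => delLast (M b) := ⟨_, rfl⟩
      have hL0 : L b0 = u ++ x :: v := by
        rw [hL]; simp only
        rw [huv, delLast_append, delLast_last_cons, delLast_map, delLast_map]
      have hMe : M = phi1 (x, L) := by
        funext b
        by_cases hbb : b = b0
        · subst hbb
          simp only [phi1, hL0, insBefore_append, huv]
          rw [insBefore_of_notMem x u hxu]
          simp [insBefore, insBefore_of_notMem x v hxv]
        · obtain ⟨w, hw⟩ := hb b hbb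
          have hLb : L b = w := by rw [hL]; simp only; rw [hw, delLast_map]
          simp only [phi1, hLb]
          rw [insBefore_of_notMem, hw]
          intro hx
          refine h3 b b0 hbb x.castSucc ?_ ?_
          · rw [hw]; exact List.mem_map_of_mem hx
          · rw [huv]; simp
      have hne : ∀ b, L b ≠ [] := by
        intro b hb
        apply h1 b
        rw [hMe]; simp [phi1, insBefore_eq_nil, hb]
      have hmem : ∀ b y, y ∈ M b ↔ (∃ z ∈ L b, y = z.castSucc) ∨ (y = Fin.last n ∧ b = b0) := by
        intro b y
        rw [hMe]
        apply phi1_mem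
        · rw [hL0]; simp
        · intro j l hjl z hz hz'
          refine h3 j l hjl z.castSucc ?_ ?_
          · rw [hMe]; simp [phi1, mem_insBefore, hz]
          · rw [hMe]; simp [phi1, mem_insBefore, hz']
      have hgood : IsListOfLists n k L := by
        rw [← lists_of_mem L M b0 hne hmem (fun b => by rw [hMe]; exact nodup_insBefore _ _)]
        exact hM
      refine ⟨(x, L), ⟨trivial, hgood, ?_, ?_⟩, hMe.symm⟩
      · rw [← nsb_of_mem L M b0 hne hmem]; exact hi
      · rw [← phi1_nse x L hgood, ← hMe]; exact hj
  · rintro ⟨⟨x, L⟩, ⟨-, hL, hi, hj⟩, rfl⟩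
    simp only at hL hi hj
    obtain ⟨h1, h2, h3, h4⟩ := id hL
    obtain ⟨b0, hb0⟩ := h4 x
    have hmem := phi1_mem x L b0 hb0 h3
    refine ⟨⟨?_, ?_, ?_⟩, phi1_P1 x L⟩
    · exact (lists_of_mem L _ b0 h1 hmem (fun b => nodup_insBefore _ _)).2 hL
    · rw [nsb_of_mem L _ b0 h1 hmem, hi]
    · rw [phi1_nse x L hL, hj]

lemma phi1_inj {n k : ℕ} (S : Set (Fin k → List (Fin n))) (hS : ∀ L ∈ S, IsListOfLists n k L) :
    Set.InjOn phi1 ((Set.univ : Set (Fin n)) ×ˢ S) := by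
  rintro ⟨x, L⟩ ⟨-, hL⟩ ⟨y, L'⟩ ⟨-, hL'⟩ h
  have e : L = L' := by
    funext b
    have := congrArg delLast (congrFun h b)
    simpa [phi1, delLast_insBefore] using this
  subst e
  obtain ⟨b, hb⟩ := (hS L hL).2.2.2 x
  have := insBefore_inj x y (L b) hb (congrFun h b)
  rw [this]

lemma setB {n k i j : ℕ} : {M | M ∈ XX (n+1) k i j ∧ ¬ P1 M ∧ ¬ P3 M} =
    phi2 '' ((Set.univ : Set (Fin k)) ×ˢ XX n k i j) := by
  ext M
  constructor
  · rintro ⟨⟨hM, hi, hj⟩, hP, hP3⟩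
    obtain ⟨b0, u, v, huv, hb⟩ := exists_block M hM
    obtain ⟨h1, h2, h3, h4⟩ := id hM
    have hv : v = [] := by
      unfold P1 at hP
      push Not at hP
      obtain ⟨b, t, ht⟩ := hP
      have hbb : b = b0 := by
        by_contra hbb
        obtain ⟨w, hw⟩ := hb b hbb
        have : Fin.last n ∈ M b := by rw [ht]; simp
        rw [hw] at this
        simp [Fin.castSucc_ne_last] at this
      subst hbb
      rcases List.eq_nil_or_concat v with h0 | ⟨w, z, h0⟩
      · exact h0
      · rw [huv, h0] at ht
        have : List.map Fin.castSucc u ++ Fin.last n :: List.map Fin.castSucc (w.concat z)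
          = (List.map Fin.castSucc u ++ Fin.last n :: List.map Fin.castSucc w) ++ [z.castSucc] := by
            simp
        rw [this] at ht
        have := List.append_inj_right' ht rfl
        simp [Fin.castSucc_ne_last] at this
    subst hv
    have hu : u ≠ [] := by
      rintro rfl
      exact hP3 ⟨b0, by simpa using huv⟩
    obtain ⟨L, hL⟩ : ∃ L : Fin k → List (Fin n), L = fun b => delLast (M b) := ⟨_, rfl⟩
    have hL0 : L b0 = u := by
      rw [hL]; simp only
      rw [huv, delLast_append, delLast_last_cons, delLast_map, delLast_map]; simp
    have hMe : M = phi2 (b0, L) := by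
      funext b
      by_cases hbb : b = b0
      · subst hbb
        simp [phi2, hL0, huv]
      · obtain ⟨w, hw⟩ := hb b hbb
        have hLb : L b = w := by rw [hL]; simp only; rw [hw, delLast_map]
        simp [phi2, hLb, hbb, hw]
    have hne : ∀ b, L b ≠ [] := by
      intro b hbn
      by_cases hbb : b = b0
      · subst hbb; exact hu (hL0 ▸ hbn)
      · apply h1 b
        rw [hMe]; simp [phi2, hbb, hbn]
    have hmem : ∀ b y, y ∈ M b ↔ (∃ z ∈ L b, y = z.castSucc) ∨ (y = Fin.last n ∧ b = b0) := by
      intro b y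
      rw [hMe]
      apply phi2_mem
    have hgood : IsListOfLists n k L := by
      rw [← lists_of_mem L M b0 hne hmem (fun b => by rw [hMe]; exact phi2_nodup _ _ _)]
      exact hM
    refine ⟨(b0, L), ⟨trivial, hgood, ?_, ?_⟩, hMe.symm⟩
    · simp only; rw [← nsb_of_mem L M b0 hne hmem]; exact hi
    · simp only; rw [← phi2_nse b0 L, ← hMe]; exact hj
  · rintro ⟨⟨b0, L⟩, ⟨-, hL, hi, hj⟩, rfl⟩
    simp only at hL hi hj
    obtain ⟨h1, h2, h3, h4⟩ := id hL
    have hmem := phi2_mem b0 L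
    refine ⟨⟨?_, ?_, ?_⟩, ?_, ?_⟩
    · exact (lists_of_mem L _ b0 h1 hmem (fun b => phi2_nodup _ _ _)).2 hL
    · rw [nsb_of_mem L _ b0 h1 hmem, hi]
    · rw [phi2_nse, hj]
    · intro h
      exact h b0 ((L b0).map Fin.castSucc) (by simp [phi2])
    · rintro ⟨b, hb⟩
      obtain ⟨y, hy⟩ := List.exists_mem_of_ne_nil _ (h1 b)
      have := (hmem b y.castSucc).2 (Or.inl ⟨y, hy, rfl⟩)
      rw [hb] at this
      simp [Fin.castSucc_ne_last] at this

lemma phi2_inj {n k : ℕ} (S : Set (Fin k → List (Fin n))) :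
    Set.InjOn phi2 ((Set.univ : Set (Fin k)) ×ˢ S) := by
  rintro ⟨x, L⟩ - ⟨y, L'⟩ - h
  have hd : ∀ (c b : Fin k) (N : Fin k → List (Fin n)), delLast (phi2 (c, N) b) = N b := by
    intro c b N
    unfold phi2
    simp only
    rw [delLast_append, delLast_map]
    split_ifs <;> simp [delLast]
  have e : L = L' := by
    funext b
    rw [← hd x b L, h, hd]
  subst e
  have h1 := (phi2_mem x L x (Fin.last n)).2 (Or.inr ⟨rfl, rfl⟩)
  rw [h, phi2_mem] at h1
  rcases h1 with ⟨z, _, hz⟩ | ⟨_, h1⟩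
  · exact absurd hz.symm (Fin.castSucc_ne_last z)
  · rw [h1]

lemma phi3_same {n k : ℕ} (p : Fin (k+1)) (L : Fin k → List (Fin n)) :
    phi3 (p, L) p = [Fin.last n] := by simp [phi3]

lemma phi3_succAbove {n k : ℕ} (p : Fin (k+1)) (L : Fin k → List (Fin n)) (b : Fin k) :
    phi3 (p, L) (p.succAbove b) = (L b).map Fin.castSucc := by simp [phi3]

lemma phi3_nse {n k : ℕ} (p : Fin (k+1)) (L : Fin k → List (Fin n)) :
    nseLL (phi3 (p, L)) = nseLL L := by
  unfold nseLL
  rw [Fin.sum_univ_succAbove _ p]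
  simp [phi3_same, phi3_succAbove, nse_map, nseList]

lemma phi3_nsb {n k : ℕ} (p : Fin (k+1)) (L : Fin k → List (Fin n)) (hne : ∀ b, L b ≠ []) :
    nsbLL (phi3 (p, L)) = nsbLL L + if p = Fin.last k then 0 else 1 := by
  rw [nsbLL_eq, nsbLL_eq, Finset.card_filter, Finset.card_filter, Fin.sum_univ_succAbove _ p,
    add_comm]
  congr 1
  · apply Finset.sum_congr rfl
    intro b _
    congr 1
    rw [eq_iff_iff]
    constructor
    · rintro ⟨l, hl, x, hx, h⟩
      rcases Fin.eq_self_or_eq_succAbove p l with rfl | ⟨l', rfl⟩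
      · rw [phi3_same] at hx
        simp only [List.mem_singleton] at hx
        subst hx
        obtain ⟨y, hy⟩ := List.exists_mem_of_ne_nil _ (hne b)
        have := h y.castSucc (by rw [phi3_succAbove]; exact List.mem_map_of_mem hy)
        exact absurd this (by simp [Fin.le_last])
      · rw [phi3_succAbove] at hx
        obtain ⟨z, hz, rfl⟩ := List.mem_map.1 hx
        refine ⟨l', (Fin.strictMono_succAbove p).lt_iff_lt.1 hl, z, hz, fun y hy => ?_⟩
        have := h y.castSucc (by rw [phi3_succAbove]; exact List.mem_map_of_mem hy)
        simpa using this
    · rintro ⟨l, hl, x, hx, h⟩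
      refine ⟨p.succAbove l, Fin.strictMono_succAbove p hl, x.castSucc, ?_, ?_⟩
      · rw [phi3_succAbove]; exact List.mem_map_of_mem hx
      · rw [phi3_succAbove]
        intro y hy
        obtain ⟨z, hz, rfl⟩ := List.mem_map.1 hy
        simpa using h z hz
  · by_cases hp : p = Fin.last k
    · rw [if_pos hp, if_neg]
      rintro ⟨l, hl, -⟩
      rw [hp] at hl
      exact absurd hl (by simp [Fin.le_last])
    · rw [if_neg hp, if_pos]
      have hlt : p < Fin.last k := Fin.lt_last_iff_ne_last.2 hp
      refine ⟨Fin.last k, hlt, ?_⟩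
      obtain ⟨l', hl'⟩ := Fin.exists_succAbove_eq (Ne.symm hp)
      obtain ⟨y, hy⟩ := List.exists_mem_of_ne_nil _ (hne l')
      refine ⟨y.castSucc, ?_, ?_⟩
      · rw [← hl', phi3_succAbove]; exact List.mem_map_of_mem hy
      · rw [phi3_same]; simp [Fin.castSucc_lt_last]

lemma phi3_good {n k : ℕ} (p : Fin (k+1)) (L : Fin k → List (Fin n)) :
    IsListOfLists (n+1) (k+1) (phi3 (p, L)) ↔ IsListOfLists n k L := by
  have l1 : ∀ z : Fin n, z.castSucc ≠ Fin.last n := Fin.castSucc_ne_last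
  have l2 : ∀ z : Fin n, Fin.last n ≠ z.castSucc := fun z => (l1 z).symm
  have inj := Fin.castSucc_injective n
  unfold IsListOfLists
  rw [Fin.forall_iff_succAbove p, Fin.forall_iff_succAbove p, Fin.forall_iff_succAbove p]
  simp only [phi3_same, phi3_succAbove]
  have a1 : (∀ l, p ≠ l → ∀ x ∈ [Fin.last n], x ∉ phi3 (p, L) l) := by
    intro l hl
    rcases Fin.eq_self_or_eq_succAbove p l with rfl | ⟨l', rfl⟩
    · exact absurd rfl hl
    · rw [phi3_succAbove]; simp [l1]
  have a2 : (∀ i : Fin k, ∀ l, p.succAbove i ≠ l → ∀ x ∈ (L i).map Fin.castSucc, x ∉ phi3 (p, L) l) ↔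
      ∀ j l, j ≠ l → ∀ x ∈ L j, x ∉ L l := by
    refine forall_congr' fun b => ?_
    rw [Fin.forall_iff_succAbove p]
    simp [phi3_same, phi3_succAbove, l1]
    grind
  have a3 : (∀ x : Fin (n+1), ∃ j, x ∈ phi3 (p, L) j) ↔ ∀ x : Fin n, ∃ j, x ∈ L j := by
    rw [Fin.forall_fin_succ']
    have : ∃ j, Fin.last n ∈ phi3 (p, L) j := ⟨p, by simp [phi3_same]⟩
    rw [and_iff_left this]
    refine forall_congr' fun x => ?_
    rw [Fin.exists_iff_succAbove p]
    simp [phi3_same, phi3_succAbove, l1]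
  rw [a2, a3, and_iff_right a1]
  simp [List.nodup_map_iff inj]

lemma setC {n k i j : ℕ} : {M | M ∈ XX (n+1) (k+1) i j ∧ P3 M} =
    phi3 '' {q : Fin (k+1) × (Fin k → List (Fin n)) | IsListOfLists n k q.2 ∧
      nsbLL q.2 + (if q.1 = Fin.last k then 0 else 1) = i ∧ nseLL q.2 = j} := by
  ext M
  constructor
  · rintro ⟨⟨hM, hi, hj⟩, p, hp⟩
    have hMe : M = phi3 (p, fun b => delLast (M (p.succAbove b))) := by
      funext l
      rcases Fin.eq_self_or_eq_succAbove p l with rfl | ⟨b, rfl⟩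
      · rw [phi3_same, hp]
      · rw [phi3_succAbove]
        obtain ⟨w, hw⟩ := exists_map_of_last_notMem (M (p.succAbove b))
          (hM.2.2.1 p _ (Fin.succAbove_ne p b).symm _ (by rw [hp]; simp))
        rw [hw, delLast_map]
    generalize hL : (fun b => delLast (M (p.succAbove b))) = L at hMe
    subst hMe
    have hgood := (phi3_good p L).1 hM
    refine ⟨(p, L), ⟨hgood, ?_, ?_⟩, rfl⟩
    · simp only; rw [← phi3_nsb p L hgood.1, hi]
    · simp only; rw [← phi3_nse p L, hj]
  · rintro ⟨⟨p, L⟩, ⟨hL, hi, hj⟩, rfl⟩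
    simp only at hL hi hj
    refine ⟨⟨(phi3_good p L).2 hL, ?_, ?_⟩, p, phi3_same p L⟩
    · rw [phi3_nsb p L hL.1, hi]
    · rw [phi3_nse, hj]

lemma phi3_inj {n k : ℕ} : Function.Injective (phi3 (n := n) (k := k)) := by
  rintro ⟨p, L⟩ ⟨q, L'⟩ h
  have hpq : p = q := by
    by_contra hne
    obtain ⟨b, hb⟩ := Fin.exists_succAbove_eq hne
    have h1 := congrFun h p
    rw [phi3_same, ← hb, phi3_succAbove] at h1
    have : Fin.last n ∈ (L' b).map Fin.castSucc := by rw [← h1]; simp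
    simp [Fin.castSucc_ne_last] at this
  subst hpq
  congr 1
  funext b
  have h1 := congrFun h (p.succAbove b)
  rw [phi3_succAbove, phi3_succAbove] at h1
  exact List.map_injective_iff.2 (Fin.castSucc_injective n) h1

lemma encard_split {n k i j : ℕ} : (XX (n+1) (k+1) i j).encard =
    {M | M ∈ XX (n+1) (k+1) i j ∧ P1 M}.encard +
    {M | M ∈ XX (n+1) (k+1) i j ∧ ¬ P1 M ∧ ¬ P3 M}.encard +
    {M | M ∈ XX (n+1) (k+1) i j ∧ P3 M}.encard := by
  have h31 : ∀ M : Fin (k+1) → List (Fin (n+1)), P3 M → ¬ P1 M := by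
    rintro M ⟨b, hb⟩ h
    exact h b [] (by simpa using hb)
  rw [← Set.encard_union_eq, ← Set.encard_union_eq]
  · congr 1
    ext M
    have := h31 M
    simp only [Set.mem_union, Set.mem_ofPred_eq]
    tauto
  · rw [Set.disjoint_left]
    rintro M (⟨_, h⟩ | ⟨_, _, h⟩) ⟨_, h'⟩
    · exact h31 M h' h
    · exact h h'
  · rw [Set.disjoint_left]
    rintro M ⟨_, h⟩ ⟨_, h', _⟩
    exact h' h

lemma encard_A_zero {n k i : ℕ} : {M | M ∈ XX (n+1) k i 0 ∧ P1 M}.encard = 0 := by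
  rw [setA]; simp

lemma encard_A_succ {n k i j : ℕ} : {M | M ∈ XX (n+1) k i (j+1) ∧ P1 M}.encard =
    n * (XX n k i j).encard := by
  rw [setA, (phi1_inj _ (fun L hL => hL.1)).encard_image, Set.encard_prod]
  simp [XX]

lemma encard_B {n k i j : ℕ} : {M | M ∈ XX (n+1) k i j ∧ ¬ P1 M ∧ ¬ P3 M}.encard =
    k * (XX n k i j).encard := by
  rw [setB, (phi2_inj _).encard_image, Set.encard_prod]
  simp

lemma encard_C_zero {n k j : ℕ} : {M | M ∈ XX (n+1) (k+1) 0 j ∧ P3 M}.encard =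
    (XX n k 0 j).encard := by
  rw [setC, phi3_inj.encard_image]
  have : {q : Fin (k+1) × (Fin k → List (Fin n)) | IsListOfLists n k q.2 ∧
      nsbLL q.2 + (if q.1 = Fin.last k then 0 else 1) = 0 ∧ nseLL q.2 = j} =
      {Fin.last k} ×ˢ XX n k 0 j := by
    ext ⟨p, L⟩
    by_cases hp : p = Fin.last k <;> simp [XX, hp]
  rw [this, Set.encard_prod]; simp

lemma encard_C_succ {n k i j : ℕ} : {M | M ∈ XX (n+1) (k+1) (i+1) j ∧ P3 M}.encard =
    (XX n k (i+1) j).encard + k * (XX n k i j).encard := by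
  rw [setC, phi3_inj.encard_image]
  have : {q : Fin (k+1) × (Fin k → List (Fin n)) | IsListOfLists n k q.2 ∧
      nsbLL q.2 + (if q.1 = Fin.last k then 0 else 1) = i+1 ∧ nseLL q.2 = j} =
      ({Fin.last k} ×ˢ XX n k (i+1) j) ∪ ({Fin.last k}ᶜ ×ˢ XX n k i j) := by
    ext ⟨p, L⟩
    by_cases hp : p = Fin.last k <;> simp [XX, hp]
  have c0 : ({Fin.last k}ᶜ : Set (Fin (k+1))).encard = k := by
    rw [← Set.Finite.cast_ncard_eq (Set.toFinite _), Set.ncard_compl]; simp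
  rw [this, Set.encard_union_eq, Set.encard_prod, Set.encard_prod, c0]
  · simp
  · rw [Set.disjoint_left]
    rintro ⟨p, L⟩ h1 h2
    exact h2.1 h1.1

/-- Stirling numbers of the first kind indexed by codegree. -/
def dd : ℕ → ℕ → ℕ
  | 0, 0 => 1
  | 0, _ + 1 => 0
  | n + 1, 0 => dd n 0
  | n + 1, j + 1 => dd n (j + 1) + n * dd n j

lemma dd_zero_right (n : ℕ) : dd n 0 = 1 := by
  induction n with
  | zero => rfl
  | succ n ih => simpa [dd] using ih

lemma dd_of_lt : ∀ n j : ℕ, n < j → dd n j = 0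
  | 0, j + 1, _ => rfl
  | n + 1, j + 1, h => by
    rw [dd, dd_of_lt n (j+1) (by omega), dd_of_lt n j (by omega)]; simp

lemma dd_self (n : ℕ) : dd (n+1) (n+1) = 0 := by
  induction n with
  | zero => rfl
  | succ n ih => rw [dd, ih, dd_of_lt _ _ (by omega)]; simp

lemma dd_eq : ∀ n j : ℕ, j ≤ n → Nat.stirlingFirst n (n - j) = dd n j
  | 0, 0, _ => rfl
  | n + 1, 0, _ => by simp [Nat.stirlingFirst_self, dd_zero_right]
  | n + 1, j + 1, h => by
    rw [dd, ← dd_eq n j (by omega)]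
    rcases Nat.eq_or_lt_of_le h with h | h
    · obtain rfl : j = n := by omega
      rw [dd_of_lt _ _ (by omega)]
      rcases j with _ | j <;> simp
    · rw [← dd_eq n (j+1) (by omega)]
      obtain ⟨m, rfl⟩ : ∃ m, n = j + 1 + m := ⟨n - (j+1), by omega⟩
      have e1 : j + 1 + m + 1 - (j + 1) = m + 1 := by omega
      have e2 : j + 1 + m - (j + 1) = m := by omega
      have e3 : j + 1 + m - j = m + 1 := by omega
      rw [e1, e2, e3, Nat.stirlingFirst_succ_succ, add_comm]

lemma SS_rec (n k j : ℕ) : dd n j * Nat.stirlingSecond (n + 1 - j) (k+1) =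
    dd n j * ((k+1) * Nat.stirlingSecond (n - j) (k+1) + Nat.stirlingSecond (n - j) k) := by
  rcases Nat.lt_or_ge n j with h | h
  · simp [dd_of_lt n j h]
  · rw [show n + 1 - j = (n - j) + 1 by omega, Nat.stirlingSecond_succ_succ]

lemma XX_encard (n k i j : ℕ) : (XX n k i j).encard =
    ((dd n j * Nat.stirlingSecond (n - j) k * dd k i : ℕ) : ℕ∞) := by
  induction n generalizing k i j with
  | zero =>
    rcases k with _ | k
    · have : XX 0 0 i j = {L | 0 = i ∧ 0 = j} := by
        ext L
        simp [XX, IsListOfLists, nsbLL, nseLL]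
      rw [this]
      rcases i with _ | i
      · rcases j with _ | j
        · simp [dd]
        · simp [dd]
      · simp [dd]
    · have : XX 0 (k+1) i j = ∅ := by
        ext L
        simp only [XX, Set.mem_ofPred_eq, Set.mem_empty_iff_false, iff_false]
        rintro ⟨⟨h, _⟩, _⟩
        obtain ⟨y, hy⟩ := List.exists_mem_of_ne_nil _ (h 0)
        exact y.elim0
      rw [this]; simp
  | succ n ih =>
    rcases k with _ | k
    · have : XX (n+1) 0 i j = ∅ := by
        ext L
        simp only [XX, Set.mem_ofPred_eq, Set.mem_empty_iff_false, iff_false]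
        rintro ⟨⟨_, _, _, h⟩, _⟩
        obtain ⟨j, hj⟩ := h 0
        exact j.elim0
      rw [this]
      rcases Nat.lt_trichotomy j (n+1) with h | h | h
      · rw [show n + 1 - j = (n - j) + 1 by omega]; simp
      · rw [h, dd_self]; simp
      · rw [dd_of_lt _ _ h]; simp
    · rw [encard_split, encard_B, ih]
      have hS := SS_rec n k
      rcases j with _ | j <;> rcases i with _ | i
      · rw [encard_A_zero, encard_C_zero, ih]
        have := hS 0
        norm_cast
        simp only [dd]
        rw [this, dd_zero_right k]; simp [dd_zero_right]
      · rw [encard_A_zero, encard_C_succ, ih, ih]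
        have := hS 0
        norm_cast
        simp only [dd]
        rw [this]; ring
      · rw [encard_A_succ, encard_C_zero, ih, ih]
        have := hS (j+1)
        norm_cast
        simp only [dd]
        rw [add_mul (dd n (j+1)), this, Nat.add_sub_add_right]; ring
      · rw [encard_A_succ, encard_C_succ, ih, ih, ih]
        have := hS (j+1)
        norm_cast
        simp only [dd]
        rw [add_mul (dd n (j+1)), this, Nat.add_sub_add_right]; ring

end SetPart

section SecondPart

lemma nseList_eq_zero {α : Type*} [LinearOrder α] (w : List α) :
    nseList w = 0 ↔ w.Pairwise (· ≤ ·) := by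
  induction w with
  | nil => simp [nseList]
  | cons z w ih => simp [nseList, ih]

lemma least_exists {n k : ℕ} (L : Fin k → List (Fin n)) (hL : L ∈ XX n k 0 0) :
    ∃ m : Fin k → Fin n, StrictMono m ∧ ∀ b, IsLeast {x | x ∈ L b} (m b) := by
  obtain ⟨⟨h1, h2, h3, h4⟩, hs, -⟩ := hL
  have hm : ∀ b, ∃ c, IsLeast {x | x ∈ L b} c := by
    intro b
    have hne : (L b).toFinset.Nonempty := by simpa using h1 b
    refine ⟨(L b).toFinset.min' hne, ?_⟩
    have := (L b).toFinset.isLeast_min' hne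
    simpa using this
  choose m hm using hm
  refine ⟨m, ?_, hm⟩
  intro j l hjl
  by_contra hcon
  rw [not_lt] at hcon
  have hne : m l ≠ m j := by
    intro h
    refine h3 j l hjl.ne (m j) (hm j).1 ?_
    rw [← h]; exact (hm l).1
  have hlt := lt_of_le_of_ne hcon hne
  rw [nsbLL_eq, Finset.card_eq_zero, Finset.filter_eq_empty_iff] at hs
  exact hs (Finset.mem_univ j) ⟨l, hjl, m l, (hm l).1, fun y hy => lt_of_lt_of_le hlt ((hm j).2 hy)⟩

def toPart {n k : ℕ} (L : Fin k → List (Fin n)) : Finset (Finset (Fin n)) :=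
  Finset.univ.image (fun b => (L b).toFinset)

lemma toPart_injOn {n k : ℕ} : Set.InjOn toPart (XX n k 0 0) := by
  intro L hL L' hL' h
  obtain ⟨m, hm, hl⟩ := least_exists L hL
  obtain ⟨m', hm', hl'⟩ := least_exists L' hL'
  have key : ∀ b, ∃ b', (L b).toFinset = (L' b').toFinset := by
    intro b
    have : (L b).toFinset ∈ toPart L' := by
      rw [← h]; exact Finset.mem_image_of_mem _ (Finset.mem_univ b)
    obtain ⟨b', -, hb'⟩ := Finset.mem_image.1 this
    exact ⟨b', hb'.symm⟩
  have key' : ∀ b, ∃ b', (L' b).toFinset = (L b').toFinset := by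
    intro b
    have : (L' b).toFinset ∈ toPart L := by
      rw [h]; exact Finset.mem_image_of_mem _ (Finset.mem_univ b)
    obtain ⟨b', -, hb'⟩ := Finset.mem_image.1 this
    exact ⟨b', hb'.symm⟩
  have hmm : ∀ b b', (L b).toFinset = (L' b').toFinset → m b = m' b' := by
    intro b b' hbb
    have e : {x | x ∈ L b} = {x | x ∈ L' b'} := by
      ext x
      have := congrArg (x ∈ ·) hbb
      simpa using this
    have := hl b
    rw [e] at this
    exact this.unique (hl' b')
  have hr : Set.range m = Set.range m' := by
    ext c
    constructor
    · rintro ⟨b, rfl⟩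
      obtain ⟨b', hb⟩ := key b
      exact ⟨b', (hmm _ _ hb).symm⟩
    · rintro ⟨b, rfl⟩
      obtain ⟨b', hb⟩ := key' b
      exact ⟨b', hmm _ _ hb.symm⟩
  have hmeq : m = m' := (hm.range_inj hm').1 hr
  funext b
  obtain ⟨b', hb⟩ := key b
  have h1 := hmm _ _ hb
  rw [← hmeq] at h1
  obtain rfl := hm.injective h1
  have z1 : nseList (L b) = 0 := by
    have := hL.2.2
    unfold nseLL at this
    exact (Finset.sum_eq_zero_iff.1 this) b (Finset.mem_univ b)
  have z2 : nseList (L' b) = 0 := by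
    have := hL'.2.2
    unfold nseLL at this
    exact (Finset.sum_eq_zero_iff.1 this) b (Finset.mem_univ b)
  rw [nseList_eq_zero] at z1 z2
  have hp : (L b).Perm (L' b) := List.perm_of_nodup_nodup_toFinset_eq (hL.1.2.1 b) (hL'.1.2.1 b) hb
  exact hp.eq_of_pairwise' z1 z2

lemma toPart_image {n k : ℕ} :
    {P : Finset (Finset (Fin n)) | IsPartitionOf n P ∧ P.card = k} = toPart '' (XX n k 0 0) := by
  ext P
  constructor
  · rintro ⟨⟨h1, h2, h3⟩, hc⟩
    have hf : ∀ s ∈ P, ∃ c, IsLeast (s : Set (Fin n)) c :=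
      fun s hs => ⟨_, s.isLeast_min' (h1 s hs)⟩
    have huniq : ∀ s ∈ P, ∀ t ∈ P, ∀ x, x ∈ s → x ∈ t → s = t := by
      intro s hs t ht x hxs hxt
      by_contra hne
      exact Finset.disjoint_left.1 (h2 s hs t ht hne) hxs hxt
    choose f hf using hf
    classical
    obtain ⟨S, hS⟩ : ∃ S : Finset (Fin n), ∀ c, c ∈ S ↔ ∃ s ∈ P, IsLeast (s : Set (Fin n)) c :=
      ⟨Finset.univ.filter (fun c => ∃ s ∈ P, IsLeast (s : Set (Fin n)) c), by simp⟩
    have hSc : S.card = k := by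
      rw [← hc]
      symm
      apply Finset.card_bij f
      · intro s hs
        exact (hS _).2 ⟨s, hs, hf s hs⟩
      · intro s hs t ht hst
        refine huniq s hs t ht (f s hs) (hf s hs).1 ?_
        rw [hst]; exact (hf t ht).1
      · intro c hcS
        obtain ⟨s, hs, hl⟩ := (hS c).1 hcS
        exact ⟨s, hs, (hf s hs).unique hl⟩
    let e := S.orderEmbOfFin hSc
    have he : ∀ b, ∃ s ∈ P, IsLeast (s : Set (Fin n)) (e b) :=
      fun b => (hS _).1 (Finset.orderEmbOfFin_mem S hSc b)
    choose s hsP hsl using he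
    have hsurj : ∀ t ∈ P, ∃ b, s b = t := by
      intro t ht
      have hmem : f t ht ∈ Set.range e := by
        rw [Finset.range_orderEmbOfFin]
        exact (hS _).2 ⟨t, ht, hf t ht⟩
      obtain ⟨b, hb⟩ := hmem
      refine ⟨b, huniq _ (hsP b) t ht (e b) (hsl b).1 ?_⟩
      rw [hb]; exact (hf t ht).1
    refine ⟨fun b => (s b).sort, ⟨⟨?_, ?_, ?_, ?_⟩, ?_, ?_⟩, ?_⟩
    · intro b hb
      have : e b ∈ (s b).sort := by
        rw [Finset.mem_sort]; exact (hsl b).1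
      simp only at hb
      rw [hb] at this
      simp at this
    · intro b; exact Finset.sort_nodup _ _
    · intro j l hjl x hx hx'
      simp only [Finset.mem_sort] at hx hx'
      have hst := huniq _ (hsP j) _ (hsP l) x hx hx'
      have h5 := hsl j
      rw [hst] at h5
      exact hjl (e.injective (h5.unique (hsl l)))
    · intro x
      obtain ⟨t, ht, hx⟩ := h3 x
      obtain ⟨b, rfl⟩ := hsurj t ht
      exact ⟨b, by simpa using hx⟩
    · rw [nsbLL_eq, Finset.card_eq_zero, Finset.filter_eq_empty_iff]
      rintro j - ⟨l, hjl, x, hx, h⟩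
      simp only [Finset.mem_sort] at hx h
      have a1 := h (e j) (hsl j).1
      have a2 := (hsl l).2 hx
      have a3 : e j < e l := e.strictMono hjl
      exact absurd (a1.trans a3) (not_lt.2 a2)
    · unfold nseLL
      apply Finset.sum_eq_zero
      intro b _
      rw [nseList_eq_zero]
      exact Finset.pairwise_sort _ _
    · ext t
      simp only [toPart, Finset.sort_toFinset, Finset.mem_image, Finset.mem_univ, true_and]
      constructor
      · rintro ⟨b, rfl⟩; exact hsP b
      · exact hsurj t
  · rintro ⟨L, ⟨⟨h1, h2, h3, h4⟩, -⟩, rfl⟩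
    refine ⟨⟨?_, ?_, ?_⟩, ?_⟩
    · intro s hs
      obtain ⟨b, -, rfl⟩ := Finset.mem_image.1 hs
      simpa using h1 b
    · intro s hs t ht hne
      obtain ⟨b, -, rfl⟩ := Finset.mem_image.1 hs
      obtain ⟨c, -, rfl⟩ := Finset.mem_image.1 ht
      rw [Finset.disjoint_left]
      intro x hx hx'
      rw [List.mem_toFinset] at hx hx'
      exact h3 b c (fun hbc => hne (by rw [hbc])) x hx hx'
    · intro x
      obtain ⟨b, hb⟩ := h4 x
      exact ⟨_, Finset.mem_image_of_mem _ (Finset.mem_univ b), by simpa using hb⟩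
    · unfold toPart
      rw [Finset.card_image_of_injective]
      · simp
      · intro b c hbc
        by_contra hne
        obtain ⟨y, hy⟩ := List.exists_mem_of_ne_nil _ (h1 b)
        have : y ∈ (L c).toFinset := by
          simp only at hbc
          rw [← hbc]; simpa using hy
        exact h3 b c hne y hy (by simpa using this)

lemma stirlingSecond_eq (n k : ℕ) : stirlingSecond n k = Nat.stirlingSecond n k := by
  unfold stirlingSecond
  rw [toPart_image, Set.ncard, toPart_injOn.encard_image, XX_encard, dd_zero_right, dd_zero_right]
  simp

end SecondPart

/-- For `1 ≤ k ≤ n`, `0 ≤ i ≤ k-1` and `0 ≤ j ≤ n-k`, the number of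
ordered partitions of `[n]` into `k` nonempty lists with `nsb = i` and `nse = j`
equals `c(n, n-j) * S(n-j, k) * c(k, k-i)`. -/
theorem list_of_lists_nsb_nse_count (n k i j : ℕ) (hk : 1 ≤ k) (hkn : k ≤ n)
    (hi : i ≤ k - 1) (hj : j ≤ n - k) :
    Set.ncard {L : Fin k → List (Fin n) |
        IsListOfLists n k L ∧ nsbLL L = i ∧ nseLL L = j} =
      stirlingFirst n (n - j) * stirlingSecond (n - j) k * stirlingFirst k (k - i) := by
  rw [stirlingFirst_eq, stirlingFirst_eq, stirlingSecond_eq, dd_eq n j (by omega), dd_eq k i (by omega)]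
  change (XX n k i j).ncard = _
  rw [Set.ncard, XX_encard, ENat.toNat_coe]
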